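/- arXiv:2502.11033 — 2 statements merged into one kernel-verified Lean document; each statement's English description precedes it below -/
import Mathlib

section
/- Closure to policy improvement implies VGD: let Π ⊆ Δ(A)^S and suppose that for every π ∈ Π, max_{π⁺∈Π} E_{s∼μ^π} ⟨Q^π_s, π_s − π⁺_s⟩ ≥ max_{π'∈Δ(A)^S} E_{s∼μ^π} ⟨Q^π_s, π_s − π'_s⟩ − ε. Assume ρ0(s) > 0 for all s, let π⋆ ∈ argmin_{π∈Π} V(π), μ⋆ := μ^{π⋆}, and ν₀ := max_s μ⋆(s)/ρ0(s). Then Π is (H ν₀, ε H² ν₀)-VGD w.r.t. M, i.e., for every π ∈ Π: V(π) − V(π⋆) ≤ H ν₀ · max_{π̃∈Π} ⟨∇V(π), π − π̃⟩ + ε H² ν₀. -/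
open scoped BigOperators Classical

noncomputable section

/-- A discounted MDP with finite state space `S` and finite action set `A`.
`r` is interpreted as a cost in `[0,1]`. -/
structure MDP (S A : Type) [Fintype S] [Fintype A] where
  P : S → A → S → ℝ
  P_nonneg : ∀ s a s', 0 ≤ P s a s'
  P_sum_one : ∀ s a, ∑ s', P s a s' = 1
  r : S → A → ℝ
  r_nonneg : ∀ s a, 0 ≤ r s a
  r_le_one : ∀ s a, r s a ≤ 1
  gamma : ℝ
  gamma_pos : 0 < gamma
  gamma_lt_one : gamma < 1
  rho0 : S → ℝ
  rho0_nonneg : ∀ s, 0 ≤ rho0 s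
  rho0_sum_one : ∑ s, rho0 s = 1

variable {S A : Type} [Fintype S] [Fintype A]

/-- `π` is a policy: a probability distribution over actions at every state. -/
def IsPolicy (π : S → A → ℝ) : Prop :=
  (∀ s a, 0 ≤ π s a) ∧ ∀ s, ∑ a, π s a = 1

namespace MDP

/-- Effective horizon `H = 1/(1-γ)`. -/
def horizon (M : MDP S A) : ℝ := 1 / (1 - M.gamma)

/-- One-step evolution of a state distribution under policy `π`. -/
def stepDist (M : MDP S A) (π : S → A → ℝ) (d : S → ℝ) : S → ℝ :=
  fun s' => ∑ s, ∑ a, d s * π s a * M.P s a s'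

/-- State distribution at time `t` under `π` with start distribution `ρ`. -/
def distAt (M : MDP S A) (π : S → A → ℝ) (ρ : S → ℝ) (t : ℕ) : S → ℝ :=
  (M.stepDist π)^[t] ρ

/-- Expected one-step cost under state distribution `d` and policy `π`. -/
def expCost (M : MDP S A) (π : S → A → ℝ) (d : S → ℝ) : ℝ :=
  ∑ s, ∑ a, d s * π s a * M.r s a

/-- Discounted value `V_ρ(π) = Σ_t γ^t E[r(s_t,a_t)]` with start-state distribution `ρ`. -/
def valueFrom (M : MDP S A) (π : S → A → ℝ) (ρ : S → ℝ) : ℝ :=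
  ∑' t : ℕ, M.gamma ^ t * M.expCost π (M.distAt π ρ t)

/-- Value starting from state `s`. -/
def valueAt (M : MDP S A) (π : S → A → ℝ) (s : S) : ℝ :=
  M.valueFrom π (fun s' => if s' = s then 1 else 0)

/-- Value from the initial state distribution `ρ0`. -/
def value (M : MDP S A) (π : S → A → ℝ) : ℝ := M.valueFrom π M.rho0

/-- Action-value (Q) function. -/
def Qfun (M : MDP S A) (π : S → A → ℝ) (s : S) (a : A) : ℝ :=
  M.r s a + M.gamma * ∑ s', M.P s a s' * M.valueAt π s'

/-- Discounted state-occupancy measure with start distribution `ρ`. -/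
def occFrom (M : MDP S A) (π : S → A → ℝ) (ρ : S → ℝ) (s : S) : ℝ :=
  (1 - M.gamma) * ∑' t : ℕ, M.gamma ^ t * M.distAt π ρ t s

/-- Discounted state-occupancy measure from the initial distribution. -/
def occ (M : MDP S A) (π : S → A → ℝ) : S → ℝ := M.occFrom π M.rho0

/-- Policy gradient in the direct parametrization:
`(∇V(π))_{s,a} = H μ^π(s) Q^π_{s,a}` (policy gradient theorem). -/
def gradV (M : MDP S A) (π : S → A → ℝ) : S → A → ℝ :=
  fun s a => M.horizon * M.occ π s * M.Qfun π s a

end MDP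

/-- Inner product on `ℝ^A`. -/
def innerA (u v : A → ℝ) : ℝ := ∑ a, u a * v a

/-- Inner product on `ℝ^{S×A}`. -/
def innerSA (u v : S → A → ℝ) : ℝ := ∑ s, ∑ a, u s a * v s a

/-- `PC` satisfies `(C, eps)`-variational gradient dominance w.r.t. `M`. -/
def IsVGD (M : MDP S A) (PC : Set (S → A → ℝ)) (C eps : ℝ) : Prop :=
  ∀ π ∈ PC, M.value π - sInf (M.value '' PC) ≤
    C * sSup ((fun π' => innerSA (M.gradV π) (fun s a => π s a - π' s a)) '' PC) + eps

/-- The ε-greedy exploratory class `Π^ε = {(1-ε)π + ε·u : π ∈ Π}`, `u` uniform. -/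
def greedyClass (PC : Set (S → A → ℝ)) (ε : ℝ) : Set (S → A → ℝ) :=
  (fun π => fun s a => (1 - ε) * π s a + ε / (Fintype.card A : ℝ)) '' PC

/-- Weighted norm `‖u‖_{L²(μ),1} = √(E_{s∼μ} ‖u_s‖₁²)`. -/
def wnorm1 (μ : S → ℝ) (u : S → A → ℝ) : ℝ :=
  Real.sqrt (∑ s, μ s * (∑ a, |u s a|) ^ 2)

/-- Weighted norm `‖u‖_{L²(μ),2} = √(E_{s∼μ} ‖u_s‖₂²)`. -/
def wnorm2 (μ : S → ℝ) (u : S → A → ℝ) : ℝ :=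
  Real.sqrt (∑ s, μ s * ∑ a, (u s a) ^ 2)

/-- `N` is a norm on `ℝ^A`. -/
def IsNormA (N : (A → ℝ) → ℝ) : Prop :=
  (∀ x, 0 ≤ N x) ∧ (∀ x, N x = 0 ↔ x = 0) ∧
    (∀ (c : ℝ) (x : A → ℝ), N (c • x) = |c| * N x) ∧ ∀ x y, N (x + y) ≤ N x + N y

/-- Dual norm of a norm `N` on `ℝ^A`. -/
def dualNormA (N : (A → ℝ) → ℝ) (z : A → ℝ) : ℝ :=
  sSup ((fun u => innerA z u) '' {u | N u ≤ 1})

/-- Weighted norm `‖u‖_{L²(μ),∘} = √(E_{s∼μ} ‖u_s‖∘²)` for an action-space norm `N`. -/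
def wnormN (μ : S → ℝ) (N : (A → ℝ) → ℝ) (u : S → A → ℝ) : ℝ :=
  Real.sqrt (∑ s, μ s * (N (u s)) ^ 2)

/-- Bregman divergence on `ℝ^A` of `R` whose gradient is `gR`. -/
def bregA (R : (A → ℝ) → ℝ) (gR : (A → ℝ) → A → ℝ) (u v : A → ℝ) : ℝ :=
  R u - R v - innerA (gR v) (u - v)

/-- The probability simplex `Δ(B)`. -/
def simplexA (B : Type) [Fintype B] : Set (B → ℝ) :=
  {p | (∀ b, 0 ≤ p b) ∧ ∑ b, p b = 1}

namespace MDP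

lemma aux_step_nonneg (M : MDP S A) {π : S → A → ℝ} (hπ : IsPolicy π) {d : S → ℝ}
    (hd : ∀ s, 0 ≤ d s) (s : S) : 0 ≤ M.stepDist π d s := by
  unfold stepDist
  exact Finset.sum_nonneg fun x _ => Finset.sum_nonneg fun a _ =>
    mul_nonneg (mul_nonneg (hd x) (hπ.1 x a)) (M.P_nonneg _ _ _)

lemma aux_step_sum (M : MDP S A) {π : S → A → ℝ} (hπ : IsPolicy π) (d : S → ℝ) :
    ∑ s, M.stepDist π d s = ∑ s, d s := by
  unfold stepDist
  rw [Finset.sum_comm]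
  refine Finset.sum_congr rfl fun s _ => ?_
  rw [Finset.sum_comm]
  simp_rw [← Finset.mul_sum, M.P_sum_one, mul_one, ← Finset.mul_sum, hπ.2, mul_one]

lemma aux_dist_succ (M : MDP S A) (π : S → A → ℝ) (ρ : S → ℝ) (t : ℕ) :
    M.distAt π ρ (t+1) = M.stepDist π (M.distAt π ρ t) := by
  unfold distAt
  rw [Function.iterate_succ_apply']

lemma aux_dist_succ' (M : MDP S A) (π : S → A → ℝ) (ρ : S → ℝ) (t : ℕ) :
    M.distAt π ρ (t+1) = M.distAt π (M.stepDist π ρ) t := by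
  unfold distAt
  rw [Function.iterate_succ_apply]

lemma aux_dist (M : MDP S A) {π : S → A → ℝ} (hπ : IsPolicy π) {ρ : S → ℝ}
    (hρ : ∀ s, 0 ≤ ρ s) (t : ℕ) :
    (∀ s, 0 ≤ M.distAt π ρ t s) ∧ ∑ s, M.distAt π ρ t s = ∑ s, ρ s := by
  induction t with
  | zero => exact ⟨hρ, rfl⟩
  | succ t ih =>
    rw [aux_dist_succ]
    exact ⟨fun s => M.aux_step_nonneg hπ ih.1 s, (M.aux_step_sum hπ _).trans ih.2⟩

lemma aux_summable (M : MDP S A) {π : S → A → ℝ} (hπ : IsPolicy π) {ρ : S → ℝ}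
    (hρ : ∀ s, 0 ≤ ρ s) (s : S) :
    Summable fun t : ℕ => M.gamma ^ t * M.distAt π ρ t s := by
  refine Summable.of_nonneg_of_le (fun t => ?_) (fun t => ?_)
    ((summable_geometric_of_lt_one M.gamma_pos.le M.gamma_lt_one).mul_right (∑ s, ρ s))
  · exact mul_nonneg (pow_nonneg M.gamma_pos.le _) ((M.aux_dist hπ hρ t).1 s)
  · refine mul_le_mul_of_nonneg_left ?_ (pow_nonneg M.gamma_pos.le _)
    rw [← (M.aux_dist hπ hρ t).2]
    exact Finset.single_le_sum (fun x _ => (M.aux_dist hπ hρ t).1 x) (Finset.mem_univ s)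

/-- Unnormalized occupancy. -/
def auxY (M : MDP S A) (π : S → A → ℝ) (ρ : S → ℝ) (s : S) : ℝ :=
  ∑' t : ℕ, M.gamma ^ t * M.distAt π ρ t s

lemma aux_hasSum (M : MDP S A) {π : S → A → ℝ} (hπ : IsPolicy π) {ρ : S → ℝ}
    (hρ : ∀ s, 0 ≤ ρ s) (f : S → ℝ) :
    HasSum (fun t : ℕ => M.gamma ^ t * ∑ s, M.distAt π ρ t s * f s)
      (∑ s, M.auxY π ρ s * f s) := by
  have h := hasSum_sum (s := Finset.univ) fun s _ => ((M.aux_summable hπ hρ s).hasSum.mul_right (f s))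
  refine h.congr_fun ?_ |> fun h => h
  intro t
  simp only [Finset.mul_sum, mul_assoc]

lemma aux_value (M : MDP S A) {π : S → A → ℝ} (hπ : IsPolicy π) {ρ : S → ℝ}
    (hρ : ∀ s, 0 ≤ ρ s) : M.valueFrom π ρ = ∑ s, M.auxY π ρ s * ∑ a, π s a * M.r s a := by
  rw [← (M.aux_hasSum hπ hρ _).tsum_eq]
  unfold valueFrom expCost
  simp only [Finset.mul_sum, mul_assoc]

lemma aux_flow' (M : MDP S A) {π : S → A → ℝ} (hπ : IsPolicy π) {ρ : S → ℝ}
    (hρ : ∀ s, 0 ≤ ρ s) (s : S) :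
    M.auxY π ρ s = ρ s + M.gamma * M.auxY π (M.stepDist π ρ) s := by
  unfold auxY
  rw [(M.aux_summable hπ hρ s).tsum_eq_zero_add, ← tsum_mul_left]
  simp only [aux_dist_succ', pow_succ', mul_assoc]
  simp [distAt]

lemma aux_flow (M : MDP S A) {π : S → A → ℝ} (hπ : IsPolicy π) {ρ : S → ℝ}
    (hρ : ∀ s, 0 ≤ ρ s) (s' : S) :
    M.auxY π ρ s' = ρ s' + M.gamma * ∑ s, M.auxY π ρ s * ∑ a, π s a * M.P s a s' := by
  rw [← (M.aux_hasSum hπ hρ _).tsum_eq, ← tsum_mul_left]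
  conv_lhs => unfold auxY
  rw [(M.aux_summable hπ hρ s').tsum_eq_zero_add]
  simp only [aux_dist_succ, pow_succ', mul_assoc, stepDist, Finset.mul_sum]
  simp [distAt]

lemma aux_lin (M : MDP S A) (π : S → A → ℝ) (ρ : S → ℝ) (t : ℕ) (s' : S) :
    M.distAt π ρ t s' =
      ∑ s, ρ s * M.distAt π (fun x => if x = s then 1 else 0) t s' := by
  induction t generalizing s' with
  | zero => simp [distAt]
  | succ t ih =>
    simp only [aux_dist_succ, stepDist]
    simp_rw [Finset.mul_sum]
    conv_rhs => rw [Finset.sum_comm]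
    refine Finset.sum_congr rfl fun x _ => ?_
    conv_rhs => rw [Finset.sum_comm]
    refine Finset.sum_congr rfl fun a _ => ?_
    rw [ih, Finset.sum_mul, Finset.sum_mul]
    refine Finset.sum_congr rfl fun y _ => ?_
    ring

lemma aux_delta (s : S) : ∀ x : S, 0 ≤ (if x = s then (1:ℝ) else 0) := by
  intro x; split_ifs <;> norm_num

lemma aux_Ylin (M : MDP S A) {π : S → A → ℝ} (hπ : IsPolicy π) (ρ : S → ℝ) (s' : S) :
    M.auxY π ρ s' =
      ∑ s, ρ s * M.auxY π (fun x => if x = s then 1 else 0) s' := by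
  have h := hasSum_sum (s := Finset.univ) fun s _ =>
    ((M.aux_summable hπ (aux_delta s) s').hasSum.mul_left (ρ s))
  unfold auxY
  rw [← h.tsum_eq]
  refine tsum_congr fun t => ?_
  rw [aux_lin, Finset.mul_sum]
  refine Finset.sum_congr rfl fun y _ => ?_
  ring

lemma aux_Vlin (M : MDP S A) {π : S → A → ℝ} (hπ : IsPolicy π) {ρ : S → ℝ}
    (hρ : ∀ s, 0 ≤ ρ s) : M.valueFrom π ρ = ∑ s, ρ s * M.valueAt π s := by
  unfold valueAt
  rw [aux_value M hπ hρ]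
  simp_rw [fun s => aux_value M hπ (aux_delta s)]
  simp_rw [M.aux_Ylin hπ ρ, Finset.sum_mul, Finset.mul_sum (s := (Finset.univ : Finset S))]
  rw [Finset.sum_comm]
  simp only [mul_assoc]

lemma aux_bellman (M : MDP S A) {π : S → A → ℝ} (hπ : IsPolicy π) (s : S) :
    M.valueAt π s = ∑ a, π s a * M.Qfun π s a := by
  have hd := aux_delta s
  have h1 : M.valueAt π s = ∑ a, π s a * M.r s a +
      M.gamma * M.valueFrom π (M.stepDist π (fun x => if x = s then 1 else 0)) := by
    unfold valueAt
    rw [aux_value M hπ hd, aux_value M hπ (M.aux_step_nonneg hπ hd)]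
    simp_rw [fun x => M.aux_flow' hπ hd x, add_mul, Finset.sum_add_distrib]
    congr 1
    · simp
    · rw [Finset.mul_sum]; simp only [mul_assoc]
  rw [h1, aux_Vlin M hπ (M.aux_step_nonneg hπ hd)]
  unfold Qfun stepDist
  simp_rw [mul_add, Finset.sum_add_distrib]
  congr 1
  simp only [ite_mul, one_mul, zero_mul]
  simp only [Finset.sum_ite_irrel, Finset.sum_const_zero, Finset.sum_ite_eq', Finset.mem_univ, if_true]
  simp_rw [Finset.sum_mul, Finset.mul_sum]
  rw [Finset.sum_comm]
  refine Finset.sum_congr rfl fun a _ => Finset.sum_congr rfl fun x _ => ?_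
  ring

lemma aux_pdl (M : MDP S A) {π π' : S → A → ℝ} (hπ : IsPolicy π) (hπ' : IsPolicy π') :
    M.value π - M.value π' = ∑ s, M.auxY π' M.rho0 s *
      innerA (M.Qfun π s) (fun a => π s a - π' s a) := by
  have e : ∀ s, innerA (M.Qfun π s) (fun a => π s a - π' s a) =
      M.valueAt π s - (∑ a, π' s a * M.r s a)
        - M.gamma * ∑ s', (∑ a, π' s a * M.P s a s') * M.valueAt π s' := by
    intro s
    rw [aux_bellman M hπ s]
    unfold innerA
    have : M.gamma * ∑ s', (∑ a, π' s a * M.P s a s') * M.valueAt π s' =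
        ∑ a, π' s a * (M.gamma * ∑ s', M.P s a s' * M.valueAt π s') := by
      simp_rw [Finset.sum_mul, Finset.mul_sum]
      rw [Finset.sum_comm]
      refine Finset.sum_congr rfl fun a _ => Finset.sum_congr rfl fun x _ => ?_
      ring
    rw [this, ← Finset.sum_sub_distrib, ← Finset.sum_sub_distrib]
    refine Finset.sum_congr rfl fun a _ => ?_
    conv_lhs => unfold Qfun
    conv_rhs => unfold Qfun
    ring
  simp_rw [e, mul_sub, Finset.sum_sub_distrib]
  unfold value
  rw [aux_value M hπ' M.rho0_nonneg, aux_Vlin M hπ M.rho0_nonneg]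
  have k : ∑ s, M.auxY π' M.rho0 s * M.valueAt π s = ∑ s, M.rho0 s * M.valueAt π s +
      ∑ s, M.auxY π' M.rho0 s *
        (M.gamma * ∑ s', (∑ a, π' s a * M.P s a s') * M.valueAt π s') := by
    conv_lhs =>
      enter [2, s]
      rw [M.aux_flow hπ' M.rho0_nonneg s, add_mul]
    rw [Finset.sum_add_distrib]
    congr 1
    simp_rw [Finset.mul_sum (s := (Finset.univ : Finset S)), Finset.sum_mul (s := (Finset.univ : Finset S))]
    rw [Finset.sum_comm]
    refine Finset.sum_congr rfl fun a _ => Finset.sum_congr rfl fun x _ => ?_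
    ring
  rw [k]; ring

lemma aux_occ (M : MDP S A) (π : S → A → ℝ) (s : S) :
    M.auxY π M.rho0 s = M.horizon * M.occ π s := by
  have : (1 - M.gamma) ≠ 0 := by linarith [M.gamma_lt_one]
  unfold auxY horizon occ occFrom
  field_simp

lemma aux_Y_ge (M : MDP S A) {π : S → A → ℝ} (hπ : IsPolicy π) (s : S) :
    M.rho0 s ≤ M.auxY π M.rho0 s := by
  have := (M.aux_summable hπ M.rho0_nonneg s).le_tsum 0 (fun t _ =>
    mul_nonneg (pow_nonneg M.gamma_pos.le _) ((M.aux_dist hπ M.rho0_nonneg t).1 s))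
  simpa [distAt, auxY] using this

lemma aux_H_pos (M : MDP S A) : 0 < M.horizon :=
  one_div_pos.2 (by linarith [M.gamma_lt_one])

end MDP

/-- Lemma: closure to policy improvement implies VGD. -/
theorem closure_to_improvement_implies_vgd [Nonempty S]
    (M : MDP S A) (PC : Set (S → A → ℝ)) (ε : ℝ)
    (hpol : ∀ π ∈ PC, IsPolicy π)
    (hρ : ∀ s, 0 < M.rho0 s)
    (hclosure : ∀ π ∈ PC,
      sSup ((fun πp => ∑ s, M.occ π s *
          innerA (M.Qfun π s) (fun a => π s a - πp s a)) '' PC) ≥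
        sSup ((fun πp => ∑ s, M.occ π s *
          innerA (M.Qfun π s) (fun a => π s a - πp s a)) '' {π' | IsPolicy π'}) - ε)
    (πstar : S → A → ℝ)
    (hstar : πstar ∈ PC ∧ ∀ π' ∈ PC, M.value πstar ≤ M.value π') :
    ∀ π ∈ PC, M.value π - M.value πstar ≤
      M.horizon * (⨆ s, M.occ πstar s / M.rho0 s) *
          sSup ((fun πt => innerSA (M.gradV π)
            (fun s a => π s a - πt s a)) '' PC) +
        ε * M.horizon ^ 2 * (⨆ s, M.occ πstar s / M.rho0 s) := by
  intro π hπC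
  have hπ := hpol π hπC
  have hs := hpol πstar hstar.1
  have hcl := hclosure π hπC
  have hH := M.aux_H_pos
  set ν := ⨆ s, M.occ πstar s / M.rho0 s with hν
  have hνle : ∀ s, M.occ πstar s ≤ ν * M.rho0 s := fun s =>
    (div_le_iff₀ (hρ s)).1 (le_ciSup (f := fun s => M.occ πstar s / M.rho0 s)
      (Set.finite_range _).bddAbove s)
  have hocc : ∀ s, M.rho0 s ≤ M.horizon * M.occ π s := fun s =>
    (M.aux_Y_ge hπ s).trans_eq (M.aux_occ π s)
  have hocc0 : ∀ s, 0 ≤ M.occ π s := fun s =>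
    nonneg_of_mul_nonneg_right ((hρ s).le.trans (hocc s)) hH
  have hν0 : 0 ≤ ν := by
    obtain ⟨s⟩ := ‹Nonempty S›
    have h1 := (M.aux_Y_ge hs s).trans_eq (M.aux_occ πstar s)
    have h2 : 0 ≤ M.occ πstar s := nonneg_of_mul_nonneg_right ((hρ s).le.trans h1) hH
    exact nonneg_of_mul_nonneg_left (h2.trans (hνle s)) (hρ s)
  have hA : Nonempty A := by
    obtain ⟨s⟩ := ‹Nonempty S›
    by_contra h
    rw [not_nonempty_iff] at h
    have := hπ.2 s
    simp at this
  choose b hb using fun s => Finite.exists_min (M.Qfun π s)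
  let g : S → A → ℝ := fun s a => if a = b s then 1 else 0
  have hg : IsPolicy g := by
    refine ⟨fun s a => ?_, fun s => ?_⟩
    · simp only [g]; split_ifs <;> norm_num
    · simp [g]
  have hmax : ∀ π', IsPolicy π' → ∀ s, innerA (M.Qfun π s) (fun a => π s a - π' s a) ≤
      innerA (M.Qfun π s) (fun a => π s a - g s a) := by
    intro π' h' s
    unfold innerA
    simp_rw [mul_sub, Finset.sum_sub_distrib]
    refine sub_le_sub_left ?_ _
    calc ∑ a, M.Qfun π s a * g s a = M.Qfun π s (b s) := by simp [g]
      _ = ∑ a, M.Qfun π s (b s) * π' s a := by rw [← Finset.mul_sum, h'.2, mul_one]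
      _ ≤ _ := Finset.sum_le_sum fun a _ => mul_le_mul_of_nonneg_right (hb s a) (h'.1 s a)
  have hG0 : ∀ s, 0 ≤ innerA (M.Qfun π s) (fun a => π s a - g s a) := by
    intro s
    refine le_trans (le_of_eq ?_) (hmax π hπ s)
    simp [innerA]
  have hsup : ∑ s, M.occ π s * innerA (M.Qfun π s) (fun a => π s a - g s a) ≤
      sSup ((fun πp => ∑ s, M.occ π s *
          innerA (M.Qfun π s) (fun a => π s a - πp s a)) '' {π' | IsPolicy π'}) := by
    refine le_csSup ⟨∑ s, M.occ π s * innerA (M.Qfun π s) (fun a => π s a - g s a), ?_⟩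
      ⟨g, hg, rfl⟩
    rintro _ ⟨π', h', rfl⟩
    exact Finset.sum_le_sum fun s _ => mul_le_mul_of_nonneg_left (hmax π' h' s) (hocc0 s)
  have hscale : sSup ((fun πt => innerSA (M.gradV π) (fun s a => π s a - πt s a)) '' PC) =
      M.horizon * sSup ((fun πp => ∑ s, M.occ π s *
          innerA (M.Qfun π s) (fun a => π s a - πp s a)) '' PC) := by
    rw [sSup_image', sSup_image', Real.mul_iSup_of_nonneg hH.le]
    refine iSup_congr fun x => ?_
    unfold innerSA innerA MDP.gradV
    simp only [Finset.mul_sum, mul_assoc]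
  have main : M.value π - M.value πstar ≤ M.horizon * ν * (M.horizon *
      ∑ s, M.occ π s * innerA (M.Qfun π s) (fun a => π s a - g s a)) := by
    rw [M.aux_pdl hπ hs, Finset.mul_sum, Finset.mul_sum]
    refine Finset.sum_le_sum fun s _ => ?_
    have h1 := hmax πstar hs s
    have hY : 0 ≤ M.auxY πstar M.rho0 s := (hρ s).le.trans (M.aux_Y_ge hs s)
    have h2 : M.auxY πstar M.rho0 s ≤ M.horizon * ν * (M.horizon * M.occ π s) := by
      rw [M.aux_occ, mul_assoc]
      refine mul_le_mul_of_nonneg_left ((hνle s).trans ?_) hH.le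
      exact mul_le_mul_of_nonneg_left (hocc s) hν0
    calc _ ≤ M.auxY πstar M.rho0 s * innerA (M.Qfun π s) (fun a => π s a - g s a) :=
          mul_le_mul_of_nonneg_left h1 hY
      _ ≤ _ := mul_le_mul_of_nonneg_right h2 (hG0 s)
      _ = _ := by ring
  rw [hscale]
  refine main.trans ?_
  have h3 := mul_le_mul_of_nonneg_left (sub_le_iff_le_add.1 (le_trans (sub_le_sub_right hsup ε) hcl))
    (mul_nonneg (mul_nonneg hH.le hν0) hH.le)
  refine le_trans (le_of_eq (mul_assoc _ _ _).symm) (h3.trans (le_of_eq ?_))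
  ring
end
end

section
/- Approximate first-order optimality from the gradient mapping: let ‖·‖ be a norm and x ∈ X. Assume: (1) h : ℝ^d → ℝ is 1-strongly convex and has an L_h-Lipschitz gradient w.r.t. ‖·‖; (2) ‖ĝ(x) − ∇f(x)‖_* ≤ ε_grad; (3) max_{z,y∈X} ‖z − y‖ ≤ D; (4) ‖∇f(x)‖_* ≤ M. Then for any x⁺ ∈ T_η^{ε_opt}(x; h) and every y ∈ X: ⟨∇f(x), x − y⟩ ≤ (D + ηM) ‖G_η(x, x⁺; h)‖_* + ε_grad D + ε_opt. -/
open scoped BigOperators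

noncomputable section

/-- Standard inner product on `ℝ^d`. -/
def dotd {d : ℕ} (u v : Fin d → ℝ) : ℝ := ∑ i, u i * v i

/-- `N` is a norm on `ℝ^d`. -/
def IsNorm {d : ℕ} (N : (Fin d → ℝ) → ℝ) : Prop :=
  (∀ x, 0 ≤ N x) ∧ (∀ x, N x = 0 ↔ x = 0) ∧
    (∀ (c : ℝ) (x : Fin d → ℝ), N (c • x) = |c| * N x) ∧ ∀ x y, N (x + y) ≤ N x + N y

/-- The dual norm of `N`. -/
def dualNorm {d : ℕ} (N : (Fin d → ℝ) → ℝ) (z : Fin d → ℝ) : ℝ :=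
  sSup ((fun u => dotd z u) '' {u | N u ≤ 1})

/-- Bregman divergence of `h` whose gradient is `gh`. -/
def breg {d : ℕ} (h : (Fin d → ℝ) → ℝ) (gh : (Fin d → ℝ) → Fin d → ℝ)
    (u v : Fin d → ℝ) : ℝ :=
  h u - h v - dotd (gh v) (u - v)

/-- Bregman gradient mapping `G_η(x, x⁺; h) = (1/η)(∇h(x) − ∇h(x⁺))`. -/
def Gmap {d : ℕ} (gh : (Fin d → ℝ) → Fin d → ℝ) (η : ℝ) (x xp : Fin d → ℝ) :
    Fin d → ℝ :=
  (1 / η) • (gh x - gh xp)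

/-- The set `T_η^{εopt}(x; h)` of `εopt`-approximate Bregman proximal updates at `x`,
for gradient estimate `g = ĝ(x)`. -/
def proxSet {d : ℕ} (X : Set (Fin d → ℝ)) (g : Fin d → ℝ)
    (gh : (Fin d → ℝ) → Fin d → ℝ) (η εopt : ℝ) (x : Fin d → ℝ) :
    Set (Fin d → ℝ) :=
  {xp | xp ∈ X ∧ ∀ z ∈ X, dotd (g + (1 / η) • (gh xp - gh x)) (z - xp) ≥ -εopt}

theorem dotd_smul_right {d : ℕ} (c : ℝ) (z u : Fin d → ℝ) : dotd z (c • u) = c * dotd z u := by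
  simp only [dotd, Pi.smul_apply, smul_eq_mul, Finset.mul_sum]
  exact Finset.sum_congr rfl fun i _ => by ring

theorem dual_bdd {d : ℕ} {N : (Fin d → ℝ) → ℝ} (hN : IsNorm N) (z : Fin d → ℝ) :
    BddAbove ((fun u => dotd z u) '' {u | N u ≤ 1}) := by
  obtain ⟨h0, hz, hs, ht⟩ := hN
  have hconv : ConvexOn ℝ Set.univ N := by
    refine ⟨convex_univ, fun a _ b _ s t hs' ht' _ => ?_⟩
    refine (ht _ _).trans ?_
    rw [hs, hs, abs_of_nonneg hs', abs_of_nonneg ht']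
    simp
  have hcont : ContinuousOn N Set.univ := hconv.continuousOn isOpen_univ
  obtain ⟨c, hc, hcb⟩ := (isCompact_sphere (0 : Fin d → ℝ) 1).exists_forall_le'
    (hcont.mono (Set.subset_univ _)) (a := 0) (fun b hb => by
      refine lt_of_le_of_ne (h0 b) fun h => ?_
      rw [(hz b).1 h.symm] at hb
      simp at hb)
  refine ⟨∑ i, |z i| * (1 / c), ?_⟩
  rintro _ ⟨u, hu, rfl⟩
  have hu : N u ≤ 1 := hu
  have hn : ‖u‖ ≤ 1 / c := by
    by_cases h : u = 0
    · rw [h, norm_zero]; positivity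
    · have hp : 0 < ‖u‖ := norm_pos_iff.2 h
      have h1 := hcb (‖u‖⁻¹ • u) (by
        simp [norm_smul, hp.ne'])
      rw [hs, abs_of_pos (inv_pos.2 hp), inv_mul_eq_div, le_div_iff₀ hp] at h1
      rw [le_div_iff₀ hc]; linarith
  refine Finset.sum_le_sum fun i _ => ?_
  calc z i * u i ≤ |z i * u i| := le_abs_self _
    _ = |z i| * |u i| := abs_mul _ _
    _ ≤ |z i| * (1 / c) :=
      mul_le_mul_of_nonneg_left ((norm_le_pi_norm u i).trans hn) (abs_nonneg _)

theorem dual_nonneg {d : ℕ} {N : (Fin d → ℝ) → ℝ} (hN : IsNorm N) (z : Fin d → ℝ) :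
    0 ≤ dualNorm N z := by
  refine le_csSup (dual_bdd hN z) ⟨0, ?_, by simp [dotd]⟩
  simp [(hN.2.1 0).2 rfl]

theorem dual_le {d : ℕ} {N : (Fin d → ℝ) → ℝ} (hN : IsNorm N) (z u : Fin d → ℝ) :
    dotd z u ≤ dualNorm N z * N u := by
  by_cases h : N u = 0
  · rw [h, (hN.2.1 u).1 h]; simp [dotd]
  · have hp : 0 < N u := lt_of_le_of_ne (hN.1 u) (Ne.symm h)
    have : dotd z ((N u)⁻¹ • u) ≤ dualNorm N z := by
      refine le_csSup (dual_bdd hN z) ⟨_, ?_, rfl⟩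
      show N _ ≤ 1
      rw [hN.2.2.1, abs_of_pos (inv_pos.2 hp), inv_mul_cancel₀ h]
    rw [dotd_smul_right, inv_mul_eq_div, div_le_iff₀ hp] at this
    exact this

theorem norm_sub_comm' {d : ℕ} {N : (Fin d → ℝ) → ℝ} (hN : IsNorm N) (u v : Fin d → ℝ) :
    N (u - v) = N (v - u) := by
  have := hN.2.2.1 (-1) (v - u)
  simpa using this

/-- Lemma: approximate first-order optimality
from the gradient mapping. -/
theorem prox_approx_optimality (d : ℕ) (X : Set (Fin d → ℝ))
    (f : (Fin d → ℝ) → ℝ) (gradf ghat : (Fin d → ℝ) → Fin d → ℝ)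
    (N : (Fin d → ℝ) → ℝ) (h : (Fin d → ℝ) → ℝ) (gh : (Fin d → ℝ) → Fin d → ℝ)
    (eta Lh epsgrad epsopt D Mb : ℝ) (x xp : Fin d → ℝ)
    (hX : Convex ℝ X) (hNorm : IsNorm N) (hx : x ∈ X)
    (heta : 0 < eta)
    (hsc : ∀ u v, breg h gh u v ≥ (1 / 2) * (N (u - v)) ^ 2)
    (hLip : ∀ u v, dualNorm N (gh u - gh v) ≤ Lh * N (u - v))
    (hg : dualNorm N (ghat x - gradf x) ≤ epsgrad)
    (hD : ∀ z ∈ X, ∀ y ∈ X, N (z - y) ≤ D)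
    (hM : dualNorm N (gradf x) ≤ Mb)
    (hxp : xp ∈ proxSet X (ghat x) gh eta epsopt x) :
    ∀ y ∈ X, dotd (gradf x) (x - y) ≤
      (D + eta * Mb) * dualNorm N (Gmap gh eta x xp) + epsgrad * D + epsopt := by
  intro y hy
  obtain ⟨hxpX, hopt⟩ := hxp
  have ho := hopt y hy
  set G := Gmap gh eta x xp with hG
  have hGe : ∀ w, dotd (gh x - gh xp) w = eta * dotd G w := by
    intro w
    simp only [hG, Gmap, dotd, Finset.mul_sum, Pi.smul_apply, smul_eq_mul]
    exact Finset.sum_congr rfl fun i _ => by field_simp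
  have hGn := dual_nonneg hNorm G
  have hn := hNorm.1 (x - xp)
  have hstep : N (x - xp) ≤ eta * dualNorm N G := by
    have h1 := hsc x xp
    have h2 := hsc xp x
    rw [norm_sub_comm' hNorm xp x] at h2
    have h3 : breg h gh x xp + breg h gh xp x = dotd (gh x - gh xp) (x - xp) := by
      have : dotd (gh x - gh xp) (x - xp) = - dotd (gh xp) (x - xp) - dotd (gh x) (xp - x) := by
        simp only [dotd, ← Finset.sum_neg_distrib, ← Finset.sum_sub_distrib, Pi.sub_apply]
        exact Finset.sum_congr rfl fun i _ => by ring
      rw [this]; unfold breg; ring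
    rw [hGe] at h3
    have h4 := mul_le_mul_of_nonneg_left (dual_le hNorm G (x - xp)) heta.le
    by_contra hlt
    push Not at hlt
    have h5 : 0 ≤ eta * dualNorm N G := by positivity
    nlinarith
  have e : dotd (gradf x) (x - y) = dotd (gradf x) (x - xp) + dotd G (xp - y)
      + dotd (ghat x - gradf x) (y - xp)
      - dotd (ghat x + (1 / eta) • (gh xp - gh x)) (y - xp) := by
    simp only [hG, Gmap, dotd, ← Finset.sum_add_distrib, ← Finset.sum_sub_distrib, Pi.sub_apply,
      Pi.add_apply, Pi.smul_apply, smul_eq_mul]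
    exact Finset.sum_congr rfl fun i _ => by ring
  have hM0 : 0 ≤ Mb := (dual_nonneg hNorm _).trans hM
  have he0 : 0 ≤ epsgrad := (dual_nonneg hNorm _).trans hg
  have a1 : dotd (gradf x) (x - xp) ≤ Mb * (eta * dualNorm N G) :=
    (dual_le hNorm _ _).trans (mul_le_mul hM hstep hn hM0)
  have a2 : dotd G (xp - y) ≤ dualNorm N G * D :=
    (dual_le hNorm _ _).trans (mul_le_mul_of_nonneg_left (hD _ hxpX _ hy) hGn)
  have a3 : dotd (ghat x - gradf x) (y - xp) ≤ epsgrad * D :=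
    (dual_le hNorm _ _).trans (mul_le_mul hg (hD _ hy _ hxpX) (hNorm.1 _) he0)
  rw [e]
  linarith
end
end
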